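/- Let y : [0,1] \to [0,\varepsilon) be C^1 with y(0) = 0 and y'(v) \ge c R_\varepsilon(y(v)) - f(v) for all v, where R_\varepsilon(y) = \sqrt{y(2\varepsilon - y)}/(\varepsilon - y), c > 0, and f : [0,1] \to \mathbb{R} is continuous with f \le 0 on [0,\alpha]. Let \bar\varepsilon = \int_0^1 f^-, let \alpha_0 \in (0,\alpha) satisfy \int_0^{\alpha_0} f^- = \bar\varepsilon/2, and suppose y(v) \ge -\int_0^v f \ge \bar\varepsilon/2 for v \in [\alpha_0, \alpha]. Then y(\alpha) \ge \bar\varepsilon/2 + c \frac{\sqrt{(\bar\varepsilon/2)(2\varepsilon - \bar\varepsilon/2)}}{\varepsilon - \bar\varepsilon/2} (\alpha - \alpha_0) + \int_{\alpha_0}^{\alpha} f^-(s) ds. -/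

import Mathlib

open Set intervalIntegral

/-- Key quantitative bound in the proof that `c*_ε → 0` as `ε → ε̄`: if `y` is a C¹
subsolution of the critical-speed first-order equation with `y ≥ -∫₀^· f ≥ ε̄/2`
on `[α₀, α]`, then `y(α)` exceeds the stated lower bound. -/
theorem stmt_16
    (f y y' : ℝ → ℝ) (α α₀ c ε : ℝ)
    (hf : ContinuousOn f (Icc 0 1))
    (hα : α ∈ Ioo (0 : ℝ) 1) (hα₀ : α₀ ∈ Ioo (0 : ℝ) α)
    (hc : 0 < c)
    (hεbar : (∫ s in (0:ℝ)..1, max (-f s) 0) < ε)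
    (hfneg : ∀ v ∈ Icc (0 : ℝ) α, f v ≤ 0)
    (hα₀def : (∫ s in (0:ℝ)..α₀, max (-f s) 0) = (∫ s in (0:ℝ)..1, max (-f s) 0) / 2)
    (hy0 : y 0 = 0)
    (hyrange : ∀ v ∈ Icc (0 : ℝ) 1, 0 ≤ y v ∧ y v < ε)
    (hyderiv : ∀ v ∈ Icc (0 : ℝ) 1, HasDerivWithinAt y (y' v) (Icc (0 : ℝ) 1) v)
    (hsub : ∀ v ∈ Icc (0 : ℝ) 1,
      c * (Real.sqrt (y v * (2 * ε - y v)) / (ε - y v)) - f v ≤ y' v)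
    (hlower : ∀ v ∈ Icc α₀ α,
      (∫ s in (0:ℝ)..1, max (-f s) 0) / 2 ≤ -∫ s in (0:ℝ)..v, f s ∧
      (-∫ s in (0:ℝ)..v, f s) ≤ y v) :
    (∫ s in (0:ℝ)..1, max (-f s) 0) / 2
      + c * (Real.sqrt (((∫ s in (0:ℝ)..1, max (-f s) 0) / 2) *
            (2 * ε - (∫ s in (0:ℝ)..1, max (-f s) 0) / 2)) /
          (ε - (∫ s in (0:ℝ)..1, max (-f s) 0) / 2)) * (α - α₀)
      + (∫ s in α₀..α, max (-f s) 0) ≤ y α := by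
  have hα1 := hα.2
  have hα₀0 := hα₀.1
  have hα₀α := hα₀.2
  have hE0 : 0 ≤ ∫ s in (0:ℝ)..1, max (-f s) 0 :=
    intervalIntegral.integral_nonneg zero_le_one (fun _ _ => le_max_right _ _)
  generalize (∫ s in (0:ℝ)..1, max (-f s) 0) = E at *
  set K := c * (Real.sqrt ((E / 2) * (2 * ε - E / 2)) / (ε - E / 2)) with hK
  have hsubset : Icc α₀ α ⊆ Icc (0:ℝ) 1 := Icc_subset_Icc hα₀0.le hα1.le
  have hmcont : ContinuousOn (fun s => max (-f s) 0) (Icc α₀ α) :=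
    ContinuousOn.sup (hf.mono hsubset).neg continuousOn_const
  have hycont : ContinuousOn y (Icc α₀ α) := fun v hv =>
    ((hyderiv v (hsubset hv)).continuousWithinAt).mono hsubset
  have hkey : ∫ s in α₀..α, (K + max (-f s) 0) ≤ y α - y α₀ := by
    refine intervalIntegral.integral_le_sub_of_hasDeriv_right_of_le (g' := y') hα₀α.le hycont ?_
      ((continuousOn_const.add hmcont).integrableOn_Icc) ?_
    · intro x hx
      have h1 : HasDerivAt y (y' x) x :=
        (hyderiv x (hsubset (Ioo_subset_Icc_self hx))).hasDerivAt
          (Icc_mem_nhds (by linarith [hx.1]) (by linarith [hx.2]))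
      exact h1.hasDerivWithinAt
    · intro x hx
      have hx' := Ioo_subset_Icc_self hx
      refine le_trans ?_ (hsub x (hsubset hx'))
      have hfx : f x ≤ 0 := hfneg x ⟨by linarith [hx.1], hx.2.le⟩
      rw [max_eq_left (by linarith), sub_eq_add_neg]
      have hyl : E / 2 ≤ y x := (hlower x hx').1.trans (hlower x hx').2
      have hyu := (hyrange x (hsubset hx')).2
      have hsq : Real.sqrt ((E / 2) * (2 * ε - E / 2)) ≤ Real.sqrt (y x * (2 * ε - y x)) :=
        Real.sqrt_le_sqrt (by nlinarith)
      have : Real.sqrt ((E / 2) * (2 * ε - E / 2)) / (ε - E / 2)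
          ≤ Real.sqrt (y x * (2 * ε - y x)) / (ε - y x) :=
        div_le_div₀ (Real.sqrt_nonneg _) hsq (by linarith) (by linarith)
      have := mul_le_mul_of_nonneg_left this hc.le
      linarith
  have hmint : IntervalIntegrable (fun s => max (-f s) 0) MeasureTheory.volume α₀ α :=
    hmcont.intervalIntegrable_of_Icc hα₀α.le
  rw [intervalIntegral.integral_add intervalIntegrable_const hmint,
    intervalIntegral.integral_const, smul_eq_mul] at hkey
  have h0 := hlower α₀ ⟨le_rfl, hα₀α.le⟩
  linarith [h0.1, h0.2]
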